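/- arXiv:2306.04327 — 3 statements merged into one kernel-verified Lean document; each statement's English description precedes it below -/
import Mathlib

section
/- (Weyl's inequalities) Let $M$ and $P$ be real symmetric $n \times n$ matrices. List the eigenvalues of $M$, $P$, and $M+P$ in decreasing order as $\alpha_1 \ge \dots \ge \alpha_n$, $\delta_1 \ge \dots \ge \delta_n$, and $\gamma_1 \ge \dots \ge \gamma_n$ respectively. Then for all indices $i, j$ with $1 \le i, j \le n$: if $i + j - 1 \le n$ then $\gamma_{i+j-1} \le \alpha_i + \delta_j$, and if $i + j - n \ge 1$ then $\alpha_i + \delta_j \le \gamma_{i+j-n}$. -/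
open Matrix BigOperators

/-- Two families taking the same values with multiplicity differ by a permutation. -/
theorem exists_perm_comp_eq_of_map_univ_eq {ι β : Type*} [Fintype ι] {f g : ι → β}
    (h : Finset.univ.val.map f = Finset.univ.val.map g) : ∃ σ : Equiv.Perm ι, f ∘ σ = g := by
  classical
  have hfib (c : β) : Nonempty ({k // g k = c} ≃ {k // f k = c}) := by
    refine Fintype.card_eq.mp ?_
    have hc := congrArg (Multiset.count c) h
    simp only [Multiset.count_map, eq_comm (a := c)] at hc
    rw [Fintype.card_subtype, Fintype.card_subtype]
    exact hc.symm
  exact ⟨Equiv.ofFiberEquiv fun c => (hfib c).some, funext fun k => Equiv.ofFiberEquiv_map _ k⟩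

/-- A real symmetric matrix has an orthonormal eigenbasis for any given enumeration of the
roots of its characteristic polynomial. -/
theorem Matrix.IsSymm.exists_orthonormalBasis {ι : Type*} [Fintype ι] [DecidableEq ι]
    {A : Matrix ι ι ℝ} (hA : A.IsSymm) {α : ι → ℝ}
    (hα : A.charpoly.roots = Finset.univ.val.map α) :
    ∃ b : OrthonormalBasis ι ℝ (EuclideanSpace ℝ ι),
      ∀ k, toEuclideanLin A (b k) = α k • b k := by
  have hH : A.IsHermitian := by rwa [Matrix.IsHermitian, conjTranspose_eq_transpose_of_trivial]
  obtain ⟨σ, hσ⟩ := exists_perm_comp_eq_of_map_univ_eq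
    (hH.roots_charpoly_eq_eigenvalues.symm.trans hα)
  refine ⟨hH.eigenvectorBasis.reindex σ.symm, fun k => ?_⟩
  have := hH.mulVec_eigenvectorBasis (σ k)
  have hk : α k = hH.eigenvalues (σ k) := by simp [← hσ]
  ext m
  simpa [hk] using congrFun this m

section InnerProduct

variable {ι E : Type*} [Fintype ι] [NormedAddCommGroup E] [InnerProductSpace ℝ E]

theorem OrthonormalBasis.inner_apply_self_eq_sum (b : OrthonormalBasis ι ℝ E) {T : E →ₗ[ℝ] E}
    {α : ι → ℝ} (hb : ∀ k, T (b k) = α k • b k) (x : E) :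
    inner ℝ x (T x) = ∑ k, α k * inner ℝ (b k) x ^ 2 := by
  have hT : T x = ∑ k, (inner ℝ (b k) x * α k) • b k := by
    conv_lhs => rw [← b.sum_repr' x]
    simp [hb, smul_smul]
  rw [hT, inner_sum]
  refine Finset.sum_congr rfl fun k _ => ?_
  rw [inner_smul_right, real_inner_comm (b k) x]
  ring

theorem OrthonormalBasis.inner_apply_self_le (b : OrthonormalBasis ι ℝ E) {T : E →ₗ[ℝ] E}
    {α : ι → ℝ} (hb : ∀ k, T (b k) = α k • b k) {S : Finset ι} {a : ℝ}
    (ha : ∀ k ∉ S, α k ≤ a) {x : E} (hx : ∀ k ∈ S, inner ℝ (b k) x = 0) :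
    inner ℝ x (T x) ≤ a * ‖x‖ ^ 2 := by
  rw [b.inner_apply_self_eq_sum hb, ← b.sum_sq_inner_right, Finset.mul_sum]
  refine Finset.sum_le_sum fun k _ => ?_
  by_cases hk : k ∈ S
  · simp [hx k hk]
  · exact mul_le_mul_of_nonneg_right (ha k hk) (sq_nonneg _)

theorem exists_ne_zero_forall_inner_eq_zero [FiniteDimensional ℝ E] (S : Finset E)
    (hS : S.card < Module.finrank ℝ E) : ∃ x : E, x ≠ 0 ∧ ∀ v ∈ S, inner ℝ v x = 0 := by
  have hker := LinearMap.ker_ne_bot_of_finrank_lt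
    (f := LinearMap.pi fun v : S => innerₛₗ ℝ (v : E)) (by simpa using hS)
  obtain ⟨x, hx, hx0⟩ := Submodule.exists_mem_ne_zero_of_ne_bot hker
  exact ⟨x, hx0, fun v hv => congrFun hx ⟨v, hv⟩⟩

/-- If the eigenvalues of `T₁` are at most `a` outside `S₁`, those of `T₂` at most `d` outside `S₂`,
and those of `T₁ + T₂` at least `g` outside `S`, then `g ≤ a + d` as soon as the three exceptional
sets have fewer elements in total than the dimension. -/
theorem OrthonormalBasis.le_add_of_card_lt {T₁ T₂ : E →ₗ[ℝ] E} (b₁ b₂ b : OrthonormalBasis ι ℝ E)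
    {α δ γ : ι → ℝ} (h₁ : ∀ k, T₁ (b₁ k) = α k • b₁ k) (h₂ : ∀ k, T₂ (b₂ k) = δ k • b₂ k)
    (h : ∀ k, (T₁ + T₂) (b k) = γ k • b k) {S₁ S₂ S : Finset ι} {a d g : ℝ}
    (ha : ∀ k ∉ S₁, α k ≤ a) (hd : ∀ k ∉ S₂, δ k ≤ d) (hg : ∀ k ∉ S, g ≤ γ k)
    (hcard : S₁.card + S₂.card + S.card < Fintype.card ι) : g ≤ a + d := by
  classical
  have : FiniteDimensional ℝ E := b.toBasis.finiteDimensional_of_finite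
  obtain ⟨x, hx0, hx⟩ := exists_ne_zero_forall_inner_eq_zero
    (S₁.image b₁ ∪ S₂.image b₂ ∪ S.image b) (by
      rw [Module.finrank_eq_card_basis b.toBasis]
      have := Finset.card_union_le (S₁.image b₁ ∪ S₂.image b₂) (S.image b)
      have := Finset.card_union_le (S₁.image b₁) (S₂.image b₂)
      have := Finset.card_image_le (s := S₁) (f := b₁)
      have := Finset.card_image_le (s := S₂) (f := b₂)
      have := Finset.card_image_le (s := S) (f := b)
      omega)
  have e₁ := b₁.inner_apply_self_le h₁ ha (x := x) fun k hk => hx _ (by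
    simp only [Finset.mem_union, Finset.mem_image]; exact .inl (.inl ⟨k, hk, rfl⟩))
  have e₂ := b₂.inner_apply_self_le h₂ hd (x := x) fun k hk => hx _ (by
    simp only [Finset.mem_union, Finset.mem_image]; exact .inl (.inr ⟨k, hk, rfl⟩))
  have e := b.inner_apply_self_le (T := -(T₁ + T₂)) (α := -γ) (a := -g) (S := S) (x := x)
    (fun k => by rw [LinearMap.neg_apply, h, Pi.neg_apply, neg_smul])
    (fun k hk => neg_le_neg (hg k hk)) fun k hk => hx _ (by
      simp only [Finset.mem_union, Finset.mem_image]; exact .inr ⟨k, hk, rfl⟩)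
  rw [LinearMap.neg_apply, LinearMap.add_apply, inner_neg_right, inner_add_right] at e
  have hpos : 0 < ‖x‖ ^ 2 := by positivity
  exact le_of_mul_le_mul_right (by linarith) hpos

end InnerProduct

/-- **Weyl's inequalities.** Let `M`, `P` be real symmetric `n × n` matrices and
let `α`, `δ`, `γ` enumerate the eigenvalues (with multiplicity, i.e. the multiset of roots of
the characteristic polynomial) of `M`, `P`, `M + P` respectively, in decreasing order.
Then (0-based indexing) `γ (i+j) ≤ α i + δ j` whenever `i + j < n`, and
`α i + δ j ≤ γ (i+j+1-n)` whenever `n - 1 ≤ i + j`. -/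
theorem fiedler_stmt_2 (n : ℕ) (M P : Matrix (Fin n) (Fin n) ℝ)
    (hM : M.IsSymm) (hP : P.IsSymm)
    (α δ γ : Fin n → ℝ) (hα : Antitone α) (hδ : Antitone δ) (hγ : Antitone γ)
    (hαr : M.charpoly.roots = Finset.univ.val.map α)
    (hδr : P.charpoly.roots = Finset.univ.val.map δ)
    (hγr : (M + P).charpoly.roots = Finset.univ.val.map γ) :
    ∀ i j : Fin n,
      (∀ h : i.val + j.val < n, γ ⟨i.val + j.val, h⟩ ≤ α i + δ j) ∧
      (n - 1 ≤ i.val + j.val →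
        α i + δ j ≤ γ ⟨i.val + j.val + 1 - n, by
          have hi := i.isLt; have hj := j.isLt; omega⟩) := by
  obtain ⟨b₁, h₁⟩ := hM.exists_orthonormalBasis hαr
  obtain ⟨b₂, h₂⟩ := hP.exists_orthonormalBasis hδr
  obtain ⟨b, h⟩ := (hM.add hP).exists_orthonormalBasis hγr
  rw [map_add] at h
  refine fun i j => ⟨fun hij => ?_, fun hij => ?_⟩
  · refine b₁.le_add_of_card_lt b₂ b h₁ h₂ h (S₁ := Finset.Iio i) (S₂ := Finset.Iio j)
      (S := Finset.Ioi ⟨i + j, hij⟩) (fun k hk => hα (by simpa using hk))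
      (fun k hk => hδ (by simpa using hk)) (fun k hk => hγ (by simpa using hk)) ?_
    simp only [Fin.card_Iio, Fin.card_Ioi, Fintype.card_fin]
    omega
  · have hneg : ∀ {A : Matrix (Fin n) (Fin n) ℝ} {v : EuclideanSpace ℝ (Fin n)} {c : ℝ},
        toEuclideanLin A v = c • v → (-toEuclideanLin A) v = (-c) • v := fun hv => by
      rw [LinearMap.neg_apply, hv, neg_smul]
    rw [← neg_le_neg_iff, neg_add]
    refine b₁.le_add_of_card_lt b₂ b (fun k => hneg (h₁ k)) (fun k => hneg (h₂ k))
      (γ := -γ) (fun k => ?_) (S₁ := Finset.Ioi i) (S₂ := Finset.Ioi j)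
      (S := Finset.Iio ⟨i + j + 1 - n, by omega⟩)
      (fun k hk => neg_le_neg (hα (by simpa using hk)))
      (fun k hk => neg_le_neg (hδ (by simpa using hk)))
      (fun k hk => neg_le_neg (hγ (by simpa using hk))) ?_
    · rw [← neg_add, LinearMap.neg_apply, h, Pi.neg_apply, neg_smul]
    · simp only [Fin.card_Iio, Fin.card_Ioi, Fintype.card_fin]
      omega
end

section
/- Let $G$ be a connected finite undirected graph on vertices $\{1, \dots, n\}$ with adjacency matrix $A$, let $v \in \{1,\dots,n\}$, and for $x > 0$ let $\tilde{L}(x)$ be the perturbed Laplacian obtained by attaching pendant vertex $n+1$ to $v$ with edge weight $x$. Then for every $\varepsilon > 0$ there exists $\delta > 0$ such that for every $x \in (0, \delta)$, every unit eigenvector $\Phi$ of $\tilde{L}(x)$ for its second smallest eigenvalue, and every edge $(i,j)$ of $G$ (i.e., $A_{ij} = 1$ with $i, j \le n$), one has $|\Phi(i) - \Phi(j)| < \varepsilon$. -/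
open Matrix BigOperators

/-- The Laplacian of the graph obtained from a graph `G` on `Fin n` by attaching a new pendant
vertex (the vertex `Fin.last n` of `Fin (n+1)`) to the vertex `v` by an edge of weight `x`:
`L̃(x) = [[L, 0], [0, 0]] + x (e_v - e_{n+1})(e_v - e_{n+1})ᵀ`. -/
noncomputable def pertLap (n : ℕ) (G : SimpleGraph (Fin n)) [DecidableRel G.Adj] (v : Fin n)
    (x : ℝ) : Matrix (Fin (n+1)) (Fin (n+1)) ℝ :=
  Matrix.reindex finSumFinEquiv finSumFinEquiv
      (Matrix.fromBlocks (G.lapMatrix ℝ) 0 0 0) +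
    x • Matrix.vecMulVec
      (fun i => if i = Fin.castSucc v then 1 else if i = Fin.last n then -1 else 0)
      (fun i => if i = Fin.castSucc v then 1 else if i = Fin.last n then -1 else 0)

/-- If `f` has the same multiset of values as the monotone `μ`, then away from a single index `f`
is bounded below by the second smallest value `μ 1`. -/
lemma exists_forall_ne_le_of_map_eq {n : ℕ} (μ f : Fin (n + 1) → ℝ) (hμ : Monotone μ)
    (h : Finset.univ.val.map f = Finset.univ.val.map μ) :
    ∃ k, ∀ i, i ≠ k → μ 1 ≤ f i := by
  have hcount := congrArg (Multiset.countP (· < μ 1)) h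
  rw [Multiset.countP_map, Multiset.countP_map] at hcount
  have hμ_card : (Finset.univ.filter fun i => μ i < μ 1).card ≤ 1 := by
    refine (Finset.card_le_card (t := {0}) fun i hi => ?_).trans (by simp)
    have hlt : i < 1 := hμ.reflect_lt (Finset.mem_filter.1 hi).2
    rw [Finset.mem_singleton]
    by_contra h0
    exact absurd hlt (not_lt.2 (Fin.one_le_of_ne_zero h0))
  have hf_card : (Finset.univ.filter fun i => f i < μ 1).card ≤ 1 :=
    (show _ = _ from hcount).trans_le hμ_card
  rw [Finset.card_le_one] at hf_card
  by_cases hk : ∃ k, f k < μ 1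
  · obtain ⟨k, hk⟩ := hk
    refine ⟨k, fun i hi => ?_⟩
    by_contra hlt
    exact hi (hf_card i (by simpa using hlt) k (by simpa using hk))
  · push Not at hk
    exact ⟨0, fun i _ => hk i⟩

/-- The quadratic form of a real symmetric matrix in coordinates of its eigenvector basis. -/
lemma Matrix.IsHermitian.dotProduct_mulVec_eq_sum_eigenvalues {ι : Type*} [Fintype ι]
    [DecidableEq ι] {A : Matrix ι ι ℝ} (hA : A.IsHermitian) (w : ι → ℝ) :
    w ⬝ᵥ (A *ᵥ w) = ∑ i, hA.eigenvalues i * (w ⬝ᵥ ⇑(hA.eigenvectorBasis i)) ^ 2 := by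
  have h := hA.eigenvectorBasis.sum_inner_mul_inner (WithLp.toLp 2 (A *ᵥ w)) (WithLp.toLp 2 w)
  simp only [EuclideanSpace.inner_eq_star_dotProduct, star_trivial] at h
  rw [← h]
  refine Finset.sum_congr rfl fun i _ => ?_
  rw [dotProduct_mulVec, ← mulVec_transpose, ← conjTranspose_eq_transpose_of_trivial, hA.eq,
    hA.mulVec_eigenvectorBasis, smul_dotProduct, smul_eq_mul,
    dotProduct_comm w (hA.eigenvectorBasis i)]
  ring

/-- Parseval's identity in the eigenvector basis of a real symmetric matrix. -/
lemma Matrix.IsHermitian.dotProduct_self_eq_sum_eigenvectorBasis {ι : Type*} [Fintype ι]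
    [DecidableEq ι] {A : Matrix ι ι ℝ} (hA : A.IsHermitian) (w : ι → ℝ) :
    w ⬝ᵥ w = ∑ i, (w ⬝ᵥ ⇑(hA.eigenvectorBasis i)) ^ 2 := by
  have h := hA.eigenvectorBasis.sum_inner_mul_inner (WithLp.toLp 2 w) (WithLp.toLp 2 w)
  simp only [EuclideanSpace.inner_eq_star_dotProduct, star_trivial] at h
  rw [← h]
  refine Finset.sum_congr rfl fun i _ => ?_
  rw [dotProduct_comm w (hA.eigenvectorBasis i)]
  ring

/-- Courant–Fischer bound: if the quadratic form of a real symmetric matrix is at most `c` times the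
squared norm on the span of two linearly independent vectors `a`, `b`, then so is its second
smallest eigenvalue. -/
lemma Matrix.IsHermitian.second_eigenvalue_le {n : ℕ}
    {A : Matrix (Fin (n + 1)) (Fin (n + 1)) ℝ} (hA : A.IsHermitian) (μ : Fin (n + 1) → ℝ)
    (hμ : Monotone μ) (hroots : A.charpoly.roots = Finset.univ.val.map μ) {c : ℝ}
    (a b : Fin (n + 1) → ℝ) (hab : ∀ s t : ℝ, s • a + t • b = 0 → s = 0 ∧ t = 0)
    (hc : ∀ s t : ℝ, (s • a + t • b) ⬝ᵥ (A *ᵥ (s • a + t • b)) ≤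
      c * ((s • a + t • b) ⬝ᵥ (s • a + t • b))) :
    μ 1 ≤ c := by
  have hmap : Finset.univ.val.map hA.eigenvalues = Finset.univ.val.map μ := by
    rw [← hroots, hA.roots_charpoly_eq_eigenvalues]
    rfl
  obtain ⟨k, hk⟩ := exists_forall_ne_le_of_map_eq μ hA.eigenvalues hμ hmap
  obtain ⟨s, t, hst, horth⟩ : ∃ s t : ℝ, ¬ (s = 0 ∧ t = 0) ∧
      (s • a + t • b) ⬝ᵥ ⇑(hA.eigenvectorBasis k) = 0 := by
    by_cases ha : a ⬝ᵥ ⇑(hA.eigenvectorBasis k) = 0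
    · exact ⟨1, 0, by simp, by simp [ha]⟩
    · refine ⟨-(b ⬝ᵥ ⇑(hA.eigenvectorBasis k)), a ⬝ᵥ ⇑(hA.eigenvectorBasis k), by tauto, ?_⟩
      rw [add_dotProduct, smul_dotProduct, smul_dotProduct, smul_eq_mul, smul_eq_mul]
      ring
  have hne : s • a + t • b ≠ 0 := fun h0 => hst (hab s t h0)
  have hbound := hc s t
  generalize s • a + t • b = w at horth hne hbound
  have hpos : 0 < w ⬝ᵥ w :=
    lt_of_le_of_ne (Finset.sum_nonneg fun i _ => mul_self_nonneg _)
      (fun h => hne (dotProduct_self_eq_zero.1 h.symm))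
  have hlower : μ 1 * (w ⬝ᵥ w) ≤ w ⬝ᵥ (A *ᵥ w) := by
    rw [hA.dotProduct_mulVec_eq_sum_eigenvalues, hA.dotProduct_self_eq_sum_eigenvectorBasis,
      Finset.mul_sum]
    refine Finset.sum_le_sum fun i _ => ?_
    by_cases hi : i = k
    · subst hi
      simp [horth]
    · exact mul_le_mul_of_nonneg_right (hk i hi) (sq_nonneg _)
  exact le_of_mul_le_mul_right (hlower.trans hbound) hpos

lemma pertLap_isHermitian (n : ℕ) (G : SimpleGraph (Fin n)) [DecidableRel G.Adj] (v : Fin n)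
    (x : ℝ) : (pertLap n G v x).IsHermitian := by
  rw [Matrix.IsHermitian, conjTranspose_eq_transpose_of_trivial, pertLap, transpose_add,
    transpose_smul, transpose_vecMulVec, transpose_reindex, fromBlocks_transpose,
    (G.isSymm_lapMatrix ℝ).eq]
  simp

/-- The quadratic form of the perturbed Laplacian is the weighted Dirichlet energy. -/
lemma dotProduct_pertLap_mulVec (n : ℕ) (G : SimpleGraph (Fin n)) [DecidableRel G.Adj] (v : Fin n)
    (x : ℝ) (w : Fin (n + 1) → ℝ) :
    w ⬝ᵥ (pertLap n G v x *ᵥ w) =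
      (∑ i, ∑ j, if G.Adj i j then (w (Fin.castSucc i) - w (Fin.castSucc j)) ^ 2 else 0) / 2 +
        x * (w (Fin.castSucc v) - w (Fin.last n)) ^ 2 := by
  have hlap := G.lapMatrix_toLinearMap₂' (R := ℝ) fun i => w (Fin.castSucc i)
  rw [toLinearMap₂'_apply'] at hlap
  rw [← hlap, pertLap, add_mulVec, dotProduct_add]
  congr 1
  · simp [dotProduct, mulVec, Fin.sum_univ_castSucc]
  · rw [smul_mulVec, vecMulVec_mulVec, dotProduct_smul]
    simp [dotProduct, Fin.sum_univ_castSucc, (Fin.castSucc_lt_last _).ne,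
      (Fin.castSucc_lt_last _).ne']
    exact Or.inl (by ring)

/-- The second smallest eigenvalue of the perturbed Laplacian is at most `2 * x`. -/
lemma pertLap_second_eigenvalue_le (n : ℕ) (G : SimpleGraph (Fin n)) [DecidableRel G.Adj]
    (v : Fin n) {x : ℝ} (hx : 0 < x) (μ : Fin (n + 1) → ℝ) (hμ : Monotone μ)
    (hroots : (pertLap n G v x).charpoly.roots = Finset.univ.val.map μ) :
    μ 1 ≤ 2 * x := by
  let a : Fin (n + 1) → ℝ := Fin.lastCases 0 fun _ => 1
  let b : Fin (n + 1) → ℝ := Fin.lastCases 1 fun _ => 0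
  have hcast : ∀ s t : ℝ, ∀ i : Fin n, (s • a + t • b) (Fin.castSucc i) = s := by
    intro s t i
    simp [a, b]
  have hlast : ∀ s t : ℝ, (s • a + t • b) (Fin.last n) = t := by
    intro s t
    simp [a, b]
  refine (pertLap_isHermitian n G v x).second_eigenvalue_le μ hμ hroots a b
    (fun s t h => ⟨?_, ?_⟩) fun s t => ?_
  · rw [← hcast s t v, h, Pi.zero_apply]
  · rw [← hlast s t, h, Pi.zero_apply]
  · rw [dotProduct_pertLap_mulVec]
    simp only [dotProduct, Fin.sum_univ_castSucc, hcast, hlast, sub_self, Finset.sum_const,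
      Finset.card_univ, Fintype.card_fin, nsmul_eq_mul]
    have hn : (1 : ℝ) ≤ n := by exact_mod_cast Fin.pos v
    simp only [ne_eq, OfNat.ofNat_ne_zero, not_false_eq_true, zero_pow, ite_self,
      Finset.sum_const_zero, zero_div, zero_add]
    have hs : s * s ≤ n * (s * s) := le_mul_of_one_le_left (mul_self_nonneg s) hn
    have hsq : (s - t) ^ 2 ≤ 2 * (n * (s * s) + t * t) := by nlinarith [sq_nonneg (s + t)]
    calc x * (s - t) ^ 2 ≤ x * (2 * (n * (s * s) + t * t)) :=
          mul_le_mul_of_nonneg_left hsq hx.le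
      _ = 2 * x * (n * (s * s) + t * t) := by ring

/-- The squared difference across an edge of `G` is bounded by the quadratic form. -/
lemma sq_sub_le_dotProduct_pertLap_mulVec (n : ℕ) (G : SimpleGraph (Fin n)) [DecidableRel G.Adj]
    (v : Fin n) {x : ℝ} (hx : 0 < x) (w : Fin (n + 1) → ℝ) {i j : Fin n} (hij : G.Adj i j) :
    (w (Fin.castSucc i) - w (Fin.castSucc j)) ^ 2 / 2 ≤ w ⬝ᵥ (pertLap n G v x *ᵥ w) := by
  rw [dotProduct_pertLap_mulVec]
  have hnonneg : ∀ k l : Fin n, 0 ≤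
      if G.Adj k l then (w (Fin.castSucc k) - w (Fin.castSucc l)) ^ 2 else 0 := by
    intro k l
    split_ifs <;> positivity
  have hinner := Finset.single_le_sum (fun l _ => hnonneg i l) (Finset.mem_univ j)
  have houter := Finset.single_le_sum
    (fun k _ => Finset.sum_nonneg (s := Finset.univ) fun l _ => hnonneg k l) (Finset.mem_univ i)
  have hpend : 0 ≤ x * (w (Fin.castSucc v) - w (Fin.last n)) ^ 2 := by positivity
  rw [if_pos hij] at hinner
  linarith

/-- For a connected graph `G` and the perturbed Laplacian `L̃(x)`: for every
`ε > 0` there is `δ > 0` such that for every `x ∈ (0, δ)`, every unit eigenvector `Φ` of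
`L̃(x)` for its second smallest eigenvalue `μ 1` (eigenvalues with multiplicity enumerated in
increasing order by `μ`) and every edge `(i, j)` of `G`, one has `|Φ i - Φ j| < ε`. -/
theorem fiedler_stmt_7 (n : ℕ) (G : SimpleGraph (Fin n)) [DecidableRel G.Adj]
    (hG : G.Connected) (v : Fin n) :
    ∀ ε > (0 : ℝ), ∃ δ > (0 : ℝ), ∀ x : ℝ, 0 < x → x < δ →
      ∀ μ : Fin (n+1) → ℝ, Monotone μ →
        (pertLap n G v x).charpoly.roots = Finset.univ.val.map μ →
        ∀ Φ : Fin (n+1) → ℝ, ∑ i, Φ i ^ 2 = 1 →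
          pertLap n G v x *ᵥ Φ = μ 1 • Φ →
          ∀ i j : Fin n, G.Adj i j →
            |Φ (Fin.castSucc i) - Φ (Fin.castSucc j)| < ε := by
  intro ε hε
  refine ⟨ε ^ 2 / 4, by positivity, fun x hx hxδ μ hμ hroots Φ hΦ heig i j hij => ?_⟩
  have hμ_le := pertLap_second_eigenvalue_le n G v hx μ hμ hroots
  have hedge := sq_sub_le_dotProduct_pertLap_mulVec n G v hx Φ hij
  have hnorm : Φ ⬝ᵥ Φ = 1 := by simpa only [dotProduct, ← sq] using hΦ
  rw [heig, dotProduct_smul, hnorm, smul_eq_mul, mul_one] at hedge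
  exact abs_lt_of_sq_lt_sq (by linarith) hε.le
end

section
/- Let $n \ge 2$, let $K_n$ be the complete graph on vertices $\{1, \dots, n\}$, and for $x > 0$ let $\tilde{L}(x)$ be the $(n+1) \times (n+1)$ perturbed Laplacian obtained by attaching pendant vertex $n+1$ to vertex $n$ with edge weight $x$. Let $a \in \mathbb{R}$, set $b = n - 1 - a$, and let $\Phi \in \mathbb{R}^{n+1}$ be the vector with $\Phi(i) = -1$ for $1 \le i \le n-1$, $\Phi(n) = a$, and $\Phi(n+1) = b$. Then $\Phi$ is an eigenvector of $\tilde{L}(x)$ with eigenvalue $a + 1$ if and only if $a^2 - a(2x + n - 2) + (n-1)(x-1) = 0$. -/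
open Matrix BigOperators

theorem pertLap_mulVec_castSucc (n : ℕ) (G : SimpleGraph (Fin n)) [DecidableRel G.Adj]
    (v : Fin n) (x : ℝ) (f : Fin (n + 1) → ℝ) (i : Fin n) :
    (pertLap n G v x *ᵥ f) i.castSucc =
      (G.lapMatrix ℝ *ᵥ fun j => f j.castSucc) i +
        if i = v then x * (f v.castSucc - f (Fin.last n)) else 0 := by
  have hj (j : Fin n) : finSumFinEquiv.symm j.castSucc = (Sum.inl j : Fin n ⊕ Fin 1) :=
    finSumFinEquiv_symm_apply_castAdd j
  have hl : finSumFinEquiv.symm (Fin.last n) = (Sum.inr 0 : Fin n ⊕ Fin 1) :=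
    finSumFinEquiv_symm_apply_natAdd 0
  simp only [pertLap, mulVec, dotProduct, Fin.sum_univ_castSucc, Matrix.add_apply,
    Matrix.smul_apply, reindex_apply, submatrix_apply, hj, hl, fromBlocks_apply₁₁,
    fromBlocks_apply₁₂, vecMulVec_apply, add_mul, Finset.sum_add_distrib]
  by_cases h : i = v
  · simp [h, Fin.castSucc_ne_last, (Fin.castSucc_ne_last _).symm]
    ring
  · simp [h, Fin.castSucc_ne_last]

theorem pertLap_mulVec_last (n : ℕ) (G : SimpleGraph (Fin n)) [DecidableRel G.Adj]
    (v : Fin n) (x : ℝ) (f : Fin (n + 1) → ℝ) :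
    (pertLap n G v x *ᵥ f) (Fin.last n) = x * (f (Fin.last n) - f v.castSucc) := by
  have hj (j : Fin n) : finSumFinEquiv.symm j.castSucc = (Sum.inl j : Fin n ⊕ Fin 1) :=
    finSumFinEquiv_symm_apply_castAdd j
  have hl : finSumFinEquiv.symm (Fin.last n) = (Sum.inr 0 : Fin n ⊕ Fin 1) :=
    finSumFinEquiv_symm_apply_natAdd 0
  simp only [pertLap, mulVec, dotProduct, Fin.sum_univ_castSucc, Matrix.add_apply,
    Matrix.smul_apply, reindex_apply, submatrix_apply, hj, hl, fromBlocks_apply₂₁,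
    fromBlocks_apply₂₂, vecMulVec_apply, add_mul, Finset.sum_add_distrib]
  simp [Fin.castSucc_ne_last, (Fin.castSucc_ne_last _).symm]
  ring

theorem lapMatrix_top_mulVec (n : ℕ) [DecidableRel (⊤ : SimpleGraph (Fin n)).Adj]
    (f : Fin n → ℝ) (i : Fin n) :
    ((⊤ : SimpleGraph (Fin n)).lapMatrix ℝ *ᵥ f) i = n * f i - ∑ j, f j := by
  have hn : 1 ≤ n := i.pos
  rw [SimpleGraph.lapMatrix_mulVec_apply, SimpleGraph.neighborFinset_eq_filter,
    ← Finset.sum_erase_add _ _ (Finset.mem_univ i)]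
  have hs : Finset.univ.filter ((⊤ : SimpleGraph (Fin n)).Adj i) = Finset.univ.erase i := by
    ext j; simp [eq_comm]
  have hd : (⊤ : SimpleGraph (Fin n)).degree i = n - 1 := by
    rw [← SimpleGraph.card_neighborFinset_eq_degree, SimpleGraph.neighborFinset_eq_filter, hs]
    simp
  rw [hs, hd]
  push_cast [hn]
  ring

/-- For the complete graph `Kₙ` (`n ≥ 2`) with a pendant vertex attached to
the vertex of index `n-1` (vertex `n` in 1-based labelling) with edge weight `x > 0`, the vector
`Φ = (-1, …, -1, a, b)` with `b = n - 1 - a` is an eigenvector of the perturbed Laplacian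
`L̃(x)` with eigenvalue `a + 1` if and only if `a² - a(2x + n - 2) + (n-1)(x-1) = 0`. -/
theorem fiedler_stmt_10 (n : ℕ) (hn : 2 ≤ n) (x : ℝ) (hx : 0 < x) (a : ℝ) :
    let b : ℝ := (n : ℝ) - 1 - a
    let Φ : Fin (n+1) → ℝ := fun i =>
      if i = Fin.last n then b else if (i : ℕ) = n - 1 then a else -1
    (Φ ≠ 0 ∧ pertLap n ⊤ ⟨n - 1, by omega⟩ x *ᵥ Φ = (a + 1) • Φ) ↔
      a ^ 2 - a * (2 * x + (n : ℝ) - 2) + ((n : ℝ) - 1) * (x - 1) = 0 := by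
  obtain ⟨m, rfl⟩ : ∃ m, n = m + 1 := ⟨n - 1, by omega⟩
  intro b Φ
  have hv : (⟨m + 1 - 1, by omega⟩ : Fin (m + 1)) = Fin.last m := rfl
  have hb : b = m - a := by simp [b]
  have hΦlast : Φ (Fin.last (m + 1)) = b := by simp [Φ]
  have hΦv : Φ (Fin.last m).castSucc = a := by simp [Φ, Fin.castSucc_ne_last]
  have hΦ (i : Fin m) : Φ i.castSucc.castSucc = -1 := by
    simp [Φ, Fin.castSucc_ne_last, i.isLt.ne]
  have hΦ_ne : Φ ≠ 0 := fun h => by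
    have := hΦ ⟨0, by omega⟩
    simp [h] at this
  rw [and_iff_right hΦ_ne, hv, funext_iff, Fin.forall_fin_succ', Fin.forall_fin_succ']
  simp only [pertLap_mulVec_castSucc, pertLap_mulVec_last, lapMatrix_top_mulVec,
    Fin.sum_univ_castSucc, Pi.smul_apply, smul_eq_mul, hΦ, hΦv, hΦlast, hb,
    Fin.castSucc_ne_last, if_true, if_false, Finset.sum_const, Finset.card_univ,
    Fintype.card_fin, nsmul_eq_mul]
  push_cast
  constructor
  · rintro ⟨⟨-, h⟩, -⟩
    linear_combination -h
  · intro h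
    refine ⟨⟨fun _ => by ring, ?_⟩, ?_⟩
    · linear_combination -h
    · linear_combination h
end
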